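/- arXiv:2410.02909 — 2 statements merged into one kernel-verified Lean document; each statement's English description precedes it below -/
import Mathlib

section
/- In the setting of the Carathéodory existence lemma, the Picard operator Φ on X = {η ∈ C([a,b],E) : η(t₀) = y₀, ‖η − y₀‖_∞ ≤ R} is a contraction with Lipschitz constant L·‖γ‖_{L¹}: for all η, ζ ∈ X, ‖Φ(η) − Φ(ζ)‖_∞ ≤ L‖γ‖_{L¹}‖η − ζ‖_∞. -/
open Set MeasureTheory

/-- The Picard operator `Φ(η)(t) = y₀ + ∫_{t₀}^t f(η(s), γ(s)) ds` is a contraction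
on `X = {η ∈ C([a,b],E) : η(t₀) = y₀, ‖η - y₀‖_∞ ≤ R}` with Lipschitz constant
`L ‖γ‖_{L¹}`: for `η, ζ ∈ X`, `‖Φ(η) - Φ(ζ)‖_∞ ≤ L ‖γ‖_{L¹} ‖η - ζ‖_∞`. -/
theorem picard_contraction
    {E Z : Type*} [NormedAddCommGroup E] [NormedSpace ℝ E] [CompleteSpace E]
    [NormedAddCommGroup Z] [NormedSpace ℝ Z] [CompleteSpace Z]
    (y₀ : E) (R : ℝ) (hR : 0 < R) (f : E → Z → E)
    (hf : ContinuousOn (fun p : E × Z => f p.1 p.2) (Metric.closedBall y₀ R ×ˢ (univ : Set Z)))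
    (hlin : ∀ y ∈ Metric.closedBall y₀ R, IsLinearMap ℝ (f y))
    (L : ℝ) (hL : 0 ≤ L)
    (hLip : ∀ y₁ ∈ Metric.closedBall y₀ R, ∀ y₂ ∈ Metric.closedBall y₀ R, ∀ z : Z,
      ‖f y₂ z - f y₁ z‖ ≤ L * ‖y₂ - y₁‖ * ‖z‖)
    (a b : ℝ) (hab : a < b) (t₀ : ℝ) (ht₀ : t₀ ∈ Icc a b)
    (γ : ℝ → Z) (hγ : IntegrableOn γ (Icc a b))
    (η ζ : ℝ → E)
    (hηc : ContinuousOn η (Icc a b)) (hη₀ : η t₀ = y₀)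
    (hηR : ∀ t ∈ Icc a b, ‖η t - y₀‖ ≤ R)
    (hζc : ContinuousOn ζ (Icc a b)) (hζ₀ : ζ t₀ = y₀)
    (hζR : ∀ t ∈ Icc a b, ‖ζ t - y₀‖ ≤ R)
    (hintη : IntegrableOn (fun s => f (η s) (γ s)) (Icc a b))
    (hintζ : IntegrableOn (fun s => f (ζ s) (γ s)) (Icc a b)) :
    ∀ t ∈ Icc a b,
      ‖(y₀ + ∫ s in t₀..t, f (η s) (γ s)) - (y₀ + ∫ s in t₀..t, f (ζ s) (γ s))‖ ≤
        L * (∫ s in Icc a b, ‖γ s‖) * sSup ((fun s => ‖η s - ζ s‖) '' Icc a b) := by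
  intro t ht
  set M := sSup ((fun s => ‖η s - ζ s‖) '' Icc a b) with hM
  have hbdd : BddAbove ((fun s => ‖η s - ζ s‖) '' Icc a b) :=
    (isCompact_Icc.image_of_continuousOn (hηc.sub hζc).norm).bddAbove
  have hle : ∀ s ∈ Icc a b, ‖η s - ζ s‖ ≤ M := fun s hs =>
    le_csSup hbdd (mem_image_of_mem _ hs)
  have hsub : uIcc t₀ t ⊆ Icc a b := uIcc_subset_Icc ht₀ ht
  have hsub' : uIoc t₀ t ⊆ Icc a b := uIoc_subset_uIcc.trans hsub
  have i1 : IntervalIntegrable (fun s => f (η s) (γ s)) volume t₀ t :=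
    (hintη.mono_set hsub).intervalIntegrable
  have i2 : IntervalIntegrable (fun s => f (ζ s) (γ s)) volume t₀ t :=
    (hintζ.mono_set hsub).intervalIntegrable
  have hpt : ∀ s ∈ Icc a b, ‖f (η s) (γ s) - f (ζ s) (γ s)‖ ≤ L * M * ‖γ s‖ := by
    intro s hs
    refine (hLip (ζ s) (mem_closedBall_iff_norm.2 (hζR s hs)) (η s)
      (mem_closedBall_iff_norm.2 (hηR s hs)) (γ s)).trans ?_
    have := hle s hs
    gcongr
  have hg : IntegrableOn (fun s => L * M * ‖γ s‖) (Icc a b) := hγ.norm.const_mul _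
  rw [add_sub_add_left_eq_sub, ← intervalIntegral.integral_sub i1 i2]
  calc ‖∫ s in t₀..t, (f (η s) (γ s) - f (ζ s) (γ s))‖
      ≤ ∫ s in uIoc t₀ t, ‖f (η s) (γ s) - f (ζ s) (γ s)‖ :=
        intervalIntegral.norm_integral_le_integral_norm_uIoc
    _ ≤ ∫ s in Icc a b, ‖f (η s) (γ s) - f (ζ s) (γ s)‖ :=
        setIntegral_mono_set (hintη.sub hintζ).norm
          (Filter.Eventually.of_forall fun s => norm_nonneg _) hsub'.eventuallyLE
    _ ≤ ∫ s in Icc a b, L * M * ‖γ s‖ :=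
        setIntegral_mono_on (hintη.sub hintζ).norm hg measurableSet_Icc hpt
    _ = L * (∫ s in Icc a b, ‖γ s‖) * M := by
        rw [integral_const_mul]; ring
end

section
/- Let E, Z be Banach spaces and f : E × Z → E a continuous map, linear in the second variable, satisfying a global Lipschitz estimate ‖f(y₂,z) − f(y₁,z)‖ ≤ L‖y₂ − y₁‖‖z‖ and ‖f(y,z)‖ ≤ (C + L‖y‖)‖z‖. Then for every γ ∈ L¹([0,1],Z) and y₀ ∈ E, the initial value problem y'(t) = f(y(t),γ(t)), y(0) = y₀ has a unique Carathéodory solution η : [0,1] → E, and η satisfies the Grönwall bound ‖η(t) − y₀‖ ≤ (C + L‖y₀‖)‖γ‖_{L¹} e^{L‖γ‖_{L¹}}. -/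
open Set MeasureTheory Real

/-- A Carathéodory solution of `y'(t) = f(y(t), γ(t))` on `[a,b]`, anchored at `t₀`. -/
def IsCaraSol {X Z : Type*} [NormedAddCommGroup X] [NormedSpace ℝ X]
    (f : X → Z → X) (γ : ℝ → Z) (a b t₀ : ℝ) (η : ℝ → X) : Prop :=
  ContinuousOn η (Icc a b) ∧
  IntegrableOn (fun s => f (η s) (γ s)) (Icc a b) ∧
  ∀ t ∈ Icc a b, η t = η t₀ + ∫ s in t₀..t, f (η s) (γ s)

lemma aux_mono {g : ℝ → ℝ} (hg : Integrable g) (hg0 : ∀ s, 0 ≤ g s) :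
    Monotone (fun t => ∫ s in (0:ℝ)..t, g s) := by
  intro a b hab
  have h := intervalIntegral.integral_add_adjacent_intervals
    (hg.intervalIntegrable (a := 0) (b := a)) (hg.intervalIntegrable (a := a) (b := b))
  have h2 : 0 ≤ ∫ s in a..b, g s := intervalIntegral.integral_nonneg hab (fun s _ => hg0 s)
  simp only
  linarith

lemma aux_cont {g : ℝ → ℝ} (hg : Integrable g) :
    Continuous (fun t => ∫ s in (0:ℝ)..t, g s) :=
  intervalIntegral.continuous_primitive (fun _ _ => hg.intervalIntegrable) 0

lemma aux_key {g : ℝ → ℝ} (hg : Integrable g) (hg0 : ∀ s, 0 ≤ g s) {k : ℝ} (hk : 0 ≤ k)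
    {t : ℝ} (ht : 0 ≤ t) :
    ∫ s in (0:ℝ)..t, k * g s * exp (k * ∫ r in (0:ℝ)..s, g r) ≤
      exp (k * ∫ r in (0:ℝ)..t, g r) - 1 := by
  have hF : Monotone (fun t => exp (k * ∫ r in (0:ℝ)..t, g r)) := by
    intro a b hab
    exact exp_le_exp.2 (mul_le_mul_of_nonneg_left (aux_mono hg hg0 hab) hk)
  have h := (hF.monotoneOn (uIcc 0 t)).intervalIntegral_deriv_mem_uIcc
  have h0 : exp (k * ∫ r in (0:ℝ)..0, g r) = 1 := by simp
  rw [uIcc_of_le (sub_nonneg.2 (hF ht))] at h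
  simp only [h0] at h
  refine le_trans (le_of_eq ?_) h.2
  apply intervalIntegral.integral_congr_ae
  filter_upwards [LocallyIntegrable.ae_hasDerivAt_integral hg.locallyIntegrable] with x hx _
  have := (((hx 0).const_mul k).exp).deriv
  rw [this]; ring

lemma aux_integrable {g u : ℝ → ℝ} (hg : Integrable g) (hu : ContinuousOn u (Icc 0 1))
    {t : ℝ} (ht : t ∈ Icc (0:ℝ) 1) : IntervalIntegrable (fun s => g s * u s) volume 0 t := by
  apply hg.intervalIntegrable.mul_continuousOn
  rw [uIcc_of_le ht.1]
  exact hu.mono (Icc_subset_Icc_right ht.2)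

lemma aux_gronwall {g u : ℝ → ℝ} (hg : Integrable g) (hg0 : ∀ s, 0 ≤ g s)
    (hu : ContinuousOn u (Icc 0 1)) {A L : ℝ} (hA : 0 ≤ A) (hL : 0 ≤ L)
    (h : ∀ t ∈ Icc (0:ℝ) 1, u t ≤ A + ∫ s in (0:ℝ)..t, L * g s * u s) :
    ∀ t ∈ Icc (0:ℝ) 1, u t ≤ A * exp (L * ∫ r in (0:ℝ)..t, g r) := by
  set m : ℝ → ℝ := fun t => ∫ r in (0:ℝ)..t, g r with hm
  have hmc : Continuous m := aux_cont hg
  have hw : ContinuousOn (fun t => u t * exp (-(L * m t))) (Icc 0 1) :=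
    hu.mul (Continuous.continuousOn (by fun_prop))
  obtain ⟨t₀, ht₀, hmax⟩ := isCompact_Icc.exists_isMaxOn (nonempty_Icc.2 zero_le_one) hw
  set S := u t₀ * exp (-(L * m t₀)) with hS
  have hbd : ∀ t ∈ Icc (0:ℝ) 1, u t ≤ S * exp (L * m t) := by
    intro t ht
    have h1 : u t * exp (-(L * m t)) ≤ S := hmax ht
    have h2 : u t = u t * exp (-(L * m t)) * exp (L * m t) := by
      rw [mul_assoc, ← exp_add]; simp
    rw [h2]
    exact mul_le_mul_of_nonneg_right h1 (exp_pos _).le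
  have hSA : S ≤ A := by
    by_contra! hlt
    have h1 := h t₀ ht₀
    have h2 : ∫ s in (0:ℝ)..t₀, L * g s * u s ≤
        ∫ s in (0:ℝ)..t₀, S * (L * g s * exp (L * m s)) := by
      apply intervalIntegral.integral_mono_on ht₀.1
      · simpa only [mul_assoc] using (aux_integrable hg hu ht₀).const_mul L
      · have := (aux_integrable (u := fun s => exp (L * m s)) hg
          (Continuous.continuousOn (by fun_prop)) ht₀).const_mul (S * L)
        simpa only [mul_assoc] using this
      · intro s hs
        have := mul_le_mul_of_nonneg_left (hbd s ⟨hs.1, hs.2.trans ht₀.2⟩)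
          (mul_nonneg hL (hg0 s))
        linarith
    rw [intervalIntegral.integral_const_mul] at h2
    have h3 := mul_le_mul_of_nonneg_left (aux_key hg hg0 hL ht₀.1) (hA.trans hlt.le)
    have h4 : u t₀ = S * exp (L * m t₀) := by
      rw [hS, mul_assoc, ← exp_add]; simp
    change S * (∫ s in (0:ℝ)..t₀, L * g s * exp (L * m s)) ≤ S * (exp (L * m t₀) - 1) at h3
    linarith
  intro t ht
  exact (hbd t ht).trans (mul_le_mul_of_nonneg_right hSA (exp_pos _).le)

lemma aux_congr {E Z : Type*} [NormedAddCommGroup E] [NormedSpace ℝ E]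
    (f : E → Z → E) {γ γ' : ℝ → Z} (hγ : EqOn γ γ' (Icc 0 1)) {η : ℝ → E}
    (h : IsCaraSol f γ 0 1 0 η) : IsCaraSol f γ' 0 1 0 η := by
  obtain ⟨h1, h2, h3⟩ := h
  refine ⟨h1, h2.congr_fun (fun s hs => by simp only [hγ hs]) measurableSet_Icc, fun t ht => ?_⟩
  rw [h3 t ht]
  congr 1
  apply intervalIntegral.integral_congr
  intro s hs
  rw [uIcc_of_le ht.1] at hs
  simp only [hγ ⟨hs.1, hs.2.trans ht.2⟩]

section
variable {E Z : Type*} [NormedAddCommGroup E] [NormedSpace ℝ E] [NormedAddCommGroup Z]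

lemma aux_int {f : E → Z → E} (hf : Continuous (fun p : E × Z => f p.1 p.2))
    {L C : ℝ} (hL : 0 ≤ L)
    (hgrowth : ∀ y : E, ∀ z : Z, ‖f y z‖ ≤ (C + L * ‖y‖) * ‖z‖)
    {γ : ℝ → Z} (hγ : Integrable γ) {η : ℝ → E} (hη : Continuous η) {B : ℝ}
    (hB : ∀ s, ‖η s‖ ≤ B) : Integrable (fun s => f (η s) (γ s)) := by
  refine Integrable.mono' (hγ.norm.const_mul (C + L * B)) ?_ ?_
  · exact hf.comp_aestronglyMeasurable (hη.aestronglyMeasurable.prodMk hγ.1)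
  · refine Filter.Eventually.of_forall fun s => (hgrowth _ _).trans ?_
    gcongr
    exact hB s

lemma aux_exists [CompleteSpace E] {f : E → Z → E}
    (hf : Continuous (fun p : E × Z => f p.1 p.2))
    {L C : ℝ} (hL : 0 ≤ L)
    (hLip : ∀ y₁ y₂ : E, ∀ z : Z, ‖f y₂ z - f y₁ z‖ ≤ L * ‖y₂ - y₁‖ * ‖z‖)
    (hgrowth : ∀ y : E, ∀ z : Z, ‖f y z‖ ≤ (C + L * ‖y‖) * ‖z‖)
    {γ : ℝ → Z} (hγ : Integrable γ) (y₀ : E) :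
    ∃ η : ℝ → E, IsCaraSol f γ 0 1 0 η ∧ η 0 = y₀ := by
  set m : ℝ → ℝ := fun t => ∫ r in (0:ℝ)..t, ‖γ r‖ with hm
  have hmc : Continuous m := aux_cont hγ.norm
  have h01 : (0:ℝ) ≤ 1 := zero_le_one
  -- extension of a weighted curve
  let X : C(Icc (0:ℝ) 1, E) → ℝ → E := fun h s =>
    IccExtend h01 (fun r : Icc (0:ℝ) 1 => exp (2 * L * m r) • h r) s
  have hXc : ∀ h, Continuous (X h) := fun h => Continuous.Icc_extend' (by fun_prop)
  have hXB : ∀ h, ∃ B, ∀ s, ‖X h s‖ ≤ B := by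
    intro h
    have hc : Continuous (fun r : Icc (0:ℝ) 1 => exp (2 * L * m r) • h r) := by fun_prop
    obtain ⟨B, hB⟩ := (isCompact_range hc).isBounded.exists_norm_le
    exact ⟨B, fun s => hB _ (mem_range_self _)⟩
  have hXi : ∀ h, Integrable (fun s => f (X h s) (γ s)) := by
    intro h
    obtain ⟨B, hB⟩ := hXB h
    exact aux_int hf hL hgrowth hγ (hXc h) hB
  have hIc : ∀ h, Continuous (fun t => ∫ s in (0:ℝ)..t, f (X h s) (γ s)) := fun h =>
    intervalIntegral.continuous_primitive (fun _ _ => (hXi h).intervalIntegrable) 0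
  let T : C(Icc (0:ℝ) 1, E) → C(Icc (0:ℝ) 1, E) := fun h =>
    ⟨fun t => exp (-(2 * L * m t)) • (y₀ + ∫ s in (0:ℝ)..t, f (X h s) (γ s)), by
      have := (hIc h).comp (continuous_subtype_val (p := fun x : ℝ => x ∈ Icc (0:ℝ) 1))
      exact Continuous.smul (by fun_prop) (continuous_const.add this)⟩
  have hT : ContractingWith (1/2) T := by
    refine ⟨by
      rw [← NNReal.coe_lt_coe]; norm_num, LipschitzWith.of_dist_le_mul fun h₁ h₂ => ?_⟩
    rw [ContinuousMap.dist_le (by positivity)]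
    intro t
    have ht := t.2
    set D := dist h₁ h₂ with hD
    have e1 : T h₁ t - T h₂ t = exp (-(2 * L * m t)) •
        ∫ s in (0:ℝ)..t, (f (X h₁ s) (γ s) - f (X h₂ s) (γ s)) := by
      rw [intervalIntegral.integral_sub (hXi h₁).intervalIntegrable (hXi h₂).intervalIntegrable]
      simp only [T, ContinuousMap.coe_mk, ← smul_sub]
      congr 1
      abel
    have e2 : ‖∫ s in (0:ℝ)..t, (f (X h₁ s) (γ s) - f (X h₂ s) (γ s))‖ ≤
        ∫ s in (0:ℝ)..t, (D / 2) * (2 * L * ‖γ s‖ * exp (2 * L * m s)) := by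
      apply intervalIntegral.norm_integral_le_of_norm_le ht.1
      · refine Filter.Eventually.of_forall fun s hs => (hLip _ _ _).trans ?_
        have hs' : s ∈ Icc (0:ℝ) 1 := ⟨hs.1.le, hs.2.trans ht.2⟩
        have e3 : ‖X h₁ s - X h₂ s‖ ≤ exp (2 * L * m s) * D := by
          simp only [X, IccExtend_of_mem _ _ hs', ← smul_sub, norm_smul, norm_eq_abs, abs_exp]
          gcongr
          rw [← dist_eq_norm]
          exact ContinuousMap.dist_apply_le_dist _
        calc L * ‖X h₁ s - X h₂ s‖ * ‖γ s‖ ≤ L * (exp (2 * L * m s) * D) * ‖γ s‖ := by gcongr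
          _ = _ := by ring
      · have := (aux_integrable (u := fun s => exp (2 * L * m s)) hγ.norm
          (Continuous.continuousOn (by fun_prop)) ht).const_mul (D / 2 * (2 * L))
        simpa only [mul_assoc] using this
    rw [intervalIntegral.integral_const_mul] at e2
    have e4 := aux_key hγ.norm (fun s => norm_nonneg _) (k := 2 * L) (by positivity) ht.1
    have hD0 : 0 ≤ D := dist_nonneg
    rw [dist_eq_norm, e1, norm_smul, norm_eq_abs, abs_exp]
    have e5 : ‖∫ s in (0:ℝ)..t, (f (X h₁ s) (γ s) - f (X h₂ s) (γ s))‖ ≤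
        D / 2 * exp (2 * L * m t) := by
      refine e2.trans (mul_le_mul_of_nonneg_left ?_ (by positivity))
      exact e4.trans (by simp only [hm]; linarith)
    calc exp (-(2 * L * m t)) * ‖∫ s in (0:ℝ)..t, (f (X h₁ s) (γ s) - f (X h₂ s) (γ s))‖
        ≤ exp (-(2 * L * m t)) * (D / 2 * exp (2 * L * m t)) := by gcongr
      _ = D / 2 * (exp (-(2 * L * m t)) * exp (2 * L * m t)) := by ring
      _ = D / 2 := by rw [← exp_add]; simp
      _ ≤ _ := by
        push_cast
        linarith
  set h := ContractingWith.fixedPoint T hT with hh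
  have hfix : T h = h := hT.fixedPoint_isFixedPt
  have hsol : ∀ t ∈ Icc (0:ℝ) 1, X h t = y₀ + ∫ s in (0:ℝ)..t, f (X h s) (γ s) := by
    intro t ht
    have e1 : X h t = exp (2 * L * m t) • h ⟨t, ht⟩ := by
      simp only [X, IccExtend_of_mem _ _ ht]
    have e2 : h ⟨t, ht⟩ = exp (-(2 * L * m t)) • (y₀ + ∫ s in (0:ℝ)..t, f (X h s) (γ s)) :=
      (DFunLike.congr_fun hfix ⟨t, ht⟩).symm
    rw [e1, e2, smul_smul, ← exp_add]
    simp
  have h0 : X h 0 = y₀ := by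
    rw [hsol 0 (by simp)]; simp
  refine ⟨X h, ⟨(hXc h).continuousOn, (hXi h).integrableOn, fun t ht => ?_⟩, h0⟩
  rw [h0]
  exact hsol t ht

lemma aux_unique {f : E → Z → E} {L : ℝ} (hL : 0 ≤ L)
    (hLip : ∀ y₁ y₂ : E, ∀ z : Z, ‖f y₂ z - f y₁ z‖ ≤ L * ‖y₂ - y₁‖ * ‖z‖)
    {γ : ℝ → Z} (hγ : Integrable γ) {η₁ η₂ : ℝ → E} (h₁ : IsCaraSol f γ 0 1 0 η₁)
    (h₂ : IsCaraSol f γ 0 1 0 η₂) (h0 : η₁ 0 = η₂ 0) : EqOn η₁ η₂ (Icc (0:ℝ) 1) := by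
  obtain ⟨c1, i1, s1⟩ := h₁
  obtain ⟨c2, i2, s2⟩ := h₂
  have hu : ContinuousOn (fun s => ‖η₁ s - η₂ s‖) (Icc 0 1) := (c1.sub c2).norm
  have hii : ∀ {F : ℝ → E}, IntegrableOn F (Icc 0 1) → ∀ t ∈ Icc (0:ℝ) 1,
      IntervalIntegrable F volume 0 t := by
    intro F hF t ht
    rw [intervalIntegrable_iff_integrableOn_Icc_of_le ht.1]
    exact hF.mono_set (Icc_subset_Icc_right ht.2)
  have key := aux_gronwall hγ.norm (fun s => norm_nonneg _) hu le_rfl hL (by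
    intro t ht
    have e : η₁ t - η₂ t = ∫ s in (0:ℝ)..t, (f (η₁ s) (γ s) - f (η₂ s) (γ s)) := by
      rw [intervalIntegral.integral_sub (hii i1 t ht) (hii i2 t ht), s1 t ht, s2 t ht, h0]
      abel
    rw [zero_add]
    rw [e]
    apply intervalIntegral.norm_integral_le_of_norm_le ht.1
    · refine Filter.Eventually.of_forall fun s hs => (hLip _ _ _).trans (le_of_eq (by ring))
    · simpa only [mul_assoc] using (aux_integrable hγ.norm hu ht).const_mul L)
  intro t ht
  have := key t ht
  rw [zero_mul] at this
  exact sub_eq_zero.1 (norm_le_zero_iff.1 this)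

lemma aux_bound {f : E → Z → E} {L C : ℝ} (hL : 0 ≤ L) (hC : 0 ≤ C)
    (hgrowth : ∀ y : E, ∀ z : Z, ‖f y z‖ ≤ (C + L * ‖y‖) * ‖z‖)
    {γ : ℝ → Z} (hγ : Integrable γ) {η : ℝ → E} {y₀ : E} (h : IsCaraSol f γ 0 1 0 η)
    (h0 : η 0 = y₀) : ∀ t ∈ Icc (0:ℝ) 1, ‖η t - y₀‖ ≤
          (C + L * ‖y₀‖) * (∫ s in (0:ℝ)..1, ‖γ s‖) *
            exp (L * ∫ s in (0:ℝ)..1, ‖γ s‖) := by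
  obtain ⟨c, i, s⟩ := h
  have hmono := aux_mono hγ.norm (fun s => norm_nonneg _)
  have hm0 : 0 ≤ ∫ s in (0:ℝ)..1, ‖γ s‖ :=
    intervalIntegral.integral_nonneg zero_le_one (fun s _ => norm_nonneg _)
  have hK : 0 ≤ C + L * ‖y₀‖ := by positivity
  have hu : ContinuousOn (fun s => ‖η s - y₀‖) (Icc 0 1) := (c.sub continuousOn_const).norm
  have key := aux_gronwall hγ.norm (fun s => norm_nonneg _) hu (mul_nonneg hK hm0) hL (by
    intro t ht
    have e : η t - y₀ = ∫ s in (0:ℝ)..t, f (η s) (γ s) := by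
      rw [s t ht, h0]; abel
    have i1 : IntervalIntegrable (fun s => (C + L * ‖y₀‖) * ‖γ s‖) volume 0 t :=
      hγ.norm.intervalIntegrable.const_mul _
    have i2 : IntervalIntegrable (fun s => L * ‖γ s‖ * ‖η s - y₀‖) volume 0 t := by
      simpa only [mul_assoc] using (aux_integrable hγ.norm hu ht).const_mul L
    have e2 : ‖η t - y₀‖ ≤ ∫ s in (0:ℝ)..t,
        ((C + L * ‖y₀‖) * ‖γ s‖ + L * ‖γ s‖ * ‖η s - y₀‖) := by
      rw [e]
      apply intervalIntegral.norm_integral_le_of_norm_le ht.1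
      · refine Filter.Eventually.of_forall fun s hs => (hgrowth _ _).trans ?_
        have h1 : ‖η s‖ ≤ ‖y₀‖ + ‖η s - y₀‖ := by
          simpa using norm_add_le y₀ (η s - y₀)
        calc (C + L * ‖η s‖) * ‖γ s‖ ≤ (C + L * (‖y₀‖ + ‖η s - y₀‖)) * ‖γ s‖ := by gcongr
          _ = _ := by ring
      · exact i1.add i2
    rw [intervalIntegral.integral_add i1 i2, intervalIntegral.integral_const_mul] at e2
    refine e2.trans ?_
    have := mul_le_mul_of_nonneg_left (hmono ht.2) hK
    simp only at this
    linarith)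
  intro t ht
  refine (key t ht).trans ?_
  have := hmono ht.2
  simp only at this
  gcongr

end

/-- Global existence, uniqueness and Grönwall estimate for `y' = f(y, γ(t))`,
`y(0) = y₀`, when `f` is globally Lipschitz in `y` (uniformly bilinearly in `z`)
and of linear growth. -/
theorem global_caratheodory_gronwall
    {E Z : Type*} [NormedAddCommGroup E] [NormedSpace ℝ E] [CompleteSpace E]
    [NormedAddCommGroup Z] [NormedSpace ℝ Z] [CompleteSpace Z]
    (f : E → Z → E) (hf : Continuous (fun p : E × Z => f p.1 p.2))
    (hlin : ∀ y : E, IsLinearMap ℝ (f y))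
    (L C : ℝ) (hL : 0 ≤ L) (hC : 0 ≤ C)
    (hLip : ∀ y₁ y₂ : E, ∀ z : Z, ‖f y₂ z - f y₁ z‖ ≤ L * ‖y₂ - y₁‖ * ‖z‖)
    (hgrowth : ∀ y : E, ∀ z : Z, ‖f y z‖ ≤ (C + L * ‖y‖) * ‖z‖)
    (γ : ℝ → Z) (hγ : IntegrableOn γ (Icc (0:ℝ) 1)) (y₀ : E) :
    (∃ η : ℝ → E, IsCaraSol f γ 0 1 0 η ∧ η 0 = y₀ ∧
        ∀ t ∈ Icc (0:ℝ) 1, ‖η t - y₀‖ ≤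
          (C + L * ‖y₀‖) * (∫ s in Icc (0:ℝ) 1, ‖γ s‖) *
            exp (L * ∫ s in Icc (0:ℝ) 1, ‖γ s‖)) ∧
      ∀ η₁ η₂ : ℝ → E, IsCaraSol f γ 0 1 0 η₁ → IsCaraSol f γ 0 1 0 η₂ →
        η₁ 0 = y₀ → η₂ 0 = y₀ → EqOn η₁ η₂ (Icc (0:ℝ) 1) := by
  have hγ' : Integrable ((Icc (0:ℝ) 1).indicator γ) := hγ.integrable_indicator measurableSet_Icc
  have heq : EqOn ((Icc (0:ℝ) 1).indicator γ) γ (Icc 0 1) := fun s hs => indicator_of_mem hs γ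
  have hint : ∫ s in (0:ℝ)..1, ‖(Icc (0:ℝ) 1).indicator γ s‖ = ∫ s in Icc (0:ℝ) 1, ‖γ s‖ := by
    rw [intervalIntegral.integral_of_le zero_le_one, ← integral_Icc_eq_integral_Ioc]
    exact setIntegral_congr_fun measurableSet_Icc (fun s hs => by simp only [heq hs])
  refine ⟨?_, fun η₁ η₂ h₁ h₂ e₁ e₂ => aux_unique hL hLip hγ' (aux_congr f heq.symm h₁)
    (aux_congr f heq.symm h₂) (e₁.trans e₂.symm)⟩
  obtain ⟨η, h, h0⟩ := aux_exists hf hL hLip hgrowth hγ' y₀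
  refine ⟨η, aux_congr f heq h, h0, ?_⟩
  rw [← hint]
  exact aux_bound hL hC hgrowth hγ' h h0
end
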